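/- Let y₀ ∈ ℝ, R > 0, let B = B(y₀, R) be the open ball in ℍ centered at y₀ with radius R, and let f : B → ℍ be left slice regular on B. Then for every q ∈ B, f(q) = Σ_{m=0}^∞ (q − y₀)ᵐ cₘ, where cₘ = (1/m!) times the m-th derivative at y₀ of the restriction of f to the real axis, and the series converges on B. -/

import Mathlib

open MeasureTheory Real Nat

noncomputable section

local notation "ℍ" => Quaternion ℝ

/-- The sphere of quaternionic imaginary units. -/
def quatSphere : Set ℍ := {q | q.re = 0 ∧ ‖q‖ = 1}

/-- The point `x + y I` of the slice `ℂ_I`. -/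
def sliceVal (I : ℍ) (z : ℝ × ℝ) : ℍ := ((z.1 : ℍ)) + ((z.2 : ℍ)) * I

/-- `f` is left slice regular on `U`: on each slice it is real differentiable and satisfies the
Cauchy–Riemann equation `(∂/∂x + I ∂/∂y) f_I = 0`. -/
def SliceRegularOn (f : ℍ → ℍ) (U : Set ℍ) : Prop :=
  ∀ I ∈ quatSphere, ∀ z : ℝ × ℝ, sliceVal I z ∈ U →
    DifferentiableAt ℝ (fun w : ℝ × ℝ => f (sliceVal I w)) z ∧
      fderiv ℝ (fun w : ℝ × ℝ => f (sliceVal I w)) z (1, 0) +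
        I * fderiv ℝ (fun w : ℝ × ℝ => f (sliceVal I w)) z (0, 1) = 0

/-! Every quaternion lies on a slice `ℂ_I`, the image of an isometric embedding of real algebras
`Φ : ℂ → ℍ` with `Φ(i) = I`. Let `ℂ` act on `ℍ` by left multiplication through `Φ`. For this complex
structure the Cauchy–Riemann equation says that `f ∘ Φ : ℂ → ℍ` is holomorphic, so the
vector-valued complex Taylor theorem expands it in powers of `z - y₀`. Since the centre is real, the
complex derivatives of `f ∘ Φ` there are derivatives of `f` along the real axis, which do not
depend on `I`. -/

open Metric

theorem iteratedDeriv_comp_algebraMap {𝕜 𝕜' F : Type*} [NontriviallyNormedField 𝕜]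
    [NontriviallyNormedField 𝕜'] [NormedAlgebra 𝕜 𝕜'] [NormedAddCommGroup F] [NormedSpace 𝕜 F]
    [NormedSpace 𝕜' F] [IsScalarTower 𝕜 𝕜' F] {n : ℕ} {g : 𝕜' → F} {t : 𝕜}
    (hg : ContDiffAt 𝕜' n g (algebraMap 𝕜 𝕜' t)) :
    iteratedDeriv n (fun s : 𝕜 => g (algebraMap 𝕜 𝕜' s)) t =
      iteratedDeriv n g (algebraMap 𝕜 𝕜' t) := by
  induction n generalizing g with
  | zero => simp only [iteratedDeriv_zero]
  | succ n ih =>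
    have h_deriv : deriv (fun s : 𝕜 => g (algebraMap 𝕜 𝕜' s)) =ᶠ[nhds t]
        fun s => deriv g (algebraMap 𝕜 𝕜' s) := by
      filter_upwards [(continuous_algebraMap 𝕜 𝕜').continuousAt.eventually
        (hg.eventually (by simp))] with s hs
      have h_scomp := (hs.differentiableAt (by simp)).hasDerivAt.scomp s
        (algebraMapCLM 𝕜 𝕜').hasDerivAt
      simpa [Function.comp_def] using h_scomp.deriv
    have hg' : ContDiffAt 𝕜' n (deriv g) (algebraMap 𝕜 𝕜' t) :=
      hg.fderiv_right_succ.clm_apply contDiffAt_const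
    rw [iteratedDeriv_succ', iteratedDeriv_succ', h_deriv.iteratedDeriv_eq, ih hg']

section CauchyRiemann

variable {E : Type*} [NormedAddCommGroup E] [NormedSpace ℝ E] [NormedSpace ℂ E]
  [IsScalarTower ℝ ℂ E]

theorem differentiableAt_complex_of_cauchyRiemann {g : ℂ → E} {w : ℂ}
    (hg : DifferentiableAt ℝ g w)
    (h_cr : fderiv ℝ g w Complex.I = Complex.I • fderiv ℝ g w 1) : DifferentiableAt ℂ g w := by
  obtain rfl : ‹NormedSpace ℝ E› = NormedSpace.complexToReal := by
    ext a x
    exact (algebraMap_smul ℂ a x).symm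
  exact differentiableAt_complex_iff_differentiableAt_real.2 ⟨hg, h_cr⟩

theorem hasSum_taylorSeries_iteratedDeriv_real [CompleteSpace E] {g : ℂ → E} {c r : ℝ} {z : ℂ}
    (hg : DifferentiableOn ℂ g (ball (c : ℂ) r)) (hz : z ∈ ball (c : ℂ) r) :
    HasSum (fun n : ℕ => (z - c) ^ n • ((n ! : ℝ)⁻¹ • iteratedDeriv n (fun t : ℝ => g t) c))
      (g z) := by
  have h_analytic : AnalyticAt ℂ g c :=
    hg.analyticAt (ball_mem_nhds _ (pos_of_mem_ball hz))
  convert Complex.hasSum_taylorSeries_on_ball hg hz using 2 with n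
  have h_iter : iteratedDeriv n (fun t : ℝ => g t) c = iteratedDeriv n g c :=
    iteratedDeriv_comp_algebraMap h_analytic.contDiffAt
  rw [h_iter, ← algebraMap_smul ℂ (n ! : ℝ)⁻¹, smul_comm]
  simp

end CauchyRiemann

/-- The normed space structure over a field `K` on a normed ring `A` in which `z : K` acts by left
multiplication by `Φ z`. For `K = ℂ` it makes the functions satisfying `∂g/∂x + Φ(i) ∂g/∂y = 0`
holomorphic. -/
abbrev normedSpaceOfRingHom {K A : Type*} [NormedField K] [SeminormedRing A] (Φ : K →+* A)
    (hΦ : ∀ z, ‖Φ z‖ ≤ ‖z‖) : NormedSpace K A where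
  __ := Module.compHom A Φ
  norm_smul_le z a := (norm_mul_le (Φ z) a).trans (by gcongr; exact hΦ z)

theorem hasSum_taylorSeries_of_algHom {A : Type*} [NormedRing A] [NormedAlgebra ℝ A]
    [CompleteSpace A] (Φ : ℂ →ₐ[ℝ] A) (hΦ : ∀ z, ‖Φ z‖ ≤ ‖z‖) {g : ℂ → A} {c r : ℝ} {z : ℂ}
    (hg : ∀ w ∈ ball (c : ℂ) r, DifferentiableAt ℝ g w)
    (h_cr : ∀ w ∈ ball (c : ℂ) r, fderiv ℝ g w 1 + Φ Complex.I * fderiv ℝ g w Complex.I = 0)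
    (hz : z ∈ ball (c : ℂ) r) :
    HasSum
      (fun n : ℕ => Φ (z - c) ^ n * ((n ! : ℝ)⁻¹ • iteratedDeriv n (fun t : ℝ => g t) c))
      (g z) := by
  let : NormedSpace ℂ A := normedSpaceOfRingHom (Φ : ℂ →+* A) hΦ
  -- Overrides `NormedSpace.complexToReal`, which is not defeq to the given real structure.
  let : NormedSpace ℝ A := NormedAlgebra.toNormedSpace A
  have smul_def (a : ℂ) (b : A) : a • b = Φ a * b := rfl
  have : IsScalarTower ℝ ℂ A :=
    ⟨fun t a b => by rw [smul_def, smul_def, map_smul, smul_mul_assoc]⟩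
  have h_holo : DifferentiableOn ℂ g (ball (c : ℂ) r) := fun w hw => by
    refine (differentiableAt_complex_of_cauchyRiemann (hg w hw) ?_).differentiableWithinAt
    rw [eq_neg_of_add_eq_zero_left (h_cr w hw), ← smul_def, smul_neg, smul_smul,
      Complex.I_mul_I, neg_one_smul, neg_neg]
  simpa only [smul_def, map_pow] using hasSum_taylorSeries_iteratedDeriv_real h_holo hz

section Slices

variable {I : ℍ}

theorem mul_self_of_mem_quatSphere (hI : I ∈ quatSphere) : I * I = -1 := by
  rw [← sq, Quaternion.sq_eq_neg_normSq.2 hI.1, Quaternion.normSq_eq_norm_mul_self, hI.2]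
  simp

theorem quatSphere_nonempty : quatSphere.Nonempty := by
  refine ⟨(Complex.I : ℂ), by simp, ?_⟩
  rw [← sq_eq_sq₀ (norm_nonneg _) zero_le_one, sq, ← Quaternion.normSq_eq_norm_mul_self,
    Quaternion.normSq_def']
  simp

theorem exists_mem_quatSphere_norm_smul_eq_im (q : ℍ) : ∃ I ∈ quatSphere, ‖q.im‖ • I = q.im := by
  by_cases hq : q.im = 0
  · obtain ⟨I, hI⟩ := quatSphere_nonempty
    exact ⟨I, hI, by simp [hq]⟩
  · have h_norm : ‖q.im‖ ≠ 0 := norm_ne_zero_iff.2 hq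
    exact ⟨‖q.im‖⁻¹ • q.im, ⟨by simp, norm_smul_inv_norm hq⟩, smul_inv_smul₀ h_norm _⟩

/-- The embedding `x + y i ↦ x + y I` of `ℂ` into `ℍ`, with image the slice `ℂ_I`. -/
def sliceHom (hI : I ∈ quatSphere) : ℂ →ₐ[ℝ] ℍ :=
  Complex.liftAux I (mul_self_of_mem_quatSphere hI)

theorem sliceHom_apply (hI : I ∈ quatSphere) (z : ℂ) : sliceHom hI z = z.re + z.im • I :=
  rfl

theorem sliceHom_I (hI : I ∈ quatSphere) : sliceHom hI Complex.I = I :=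
  Complex.liftAux_apply_I _ _

theorem sliceHom_ofReal (hI : I ∈ quatSphere) (t : ℝ) : sliceHom hI t = t :=
  (sliceHom hI).commutes t

theorem sliceVal_equivRealProdCLM (hI : I ∈ quatSphere) (z : ℂ) :
    sliceVal I (Complex.equivRealProdCLM z) = sliceHom hI z := by
  rw [sliceHom_apply, ← Quaternion.coe_mul_eq_smul]
  rfl

theorem star_sliceHom (hI : I ∈ quatSphere) (z : ℂ) :
    star (sliceHom hI z) = sliceHom hI (star z) := by
  simp [sliceHom_apply, Quaternion.star_eq_neg.2 hI.1]

theorem norm_sliceHom (hI : I ∈ quatSphere) (z : ℂ) : ‖sliceHom hI z‖ = ‖z‖ := by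
  have h_normSq : Quaternion.normSq (sliceHom hI z) = Complex.normSq z := by
    rw [← Quaternion.coe_inj, ← Quaternion.self_mul_star, star_sliceHom, ← map_mul,
      Complex.star_def, Complex.mul_conj, sliceHom_ofReal]
  rwa [Quaternion.normSq_eq_norm_mul_self, Complex.normSq_eq_norm_sq, ← sq,
    sq_eq_sq₀ (norm_nonneg _) (norm_nonneg _)] at h_normSq

theorem sliceHom_mem_ball_iff (hI : I ∈ quatSphere) {z : ℂ} {c r : ℝ} :
    sliceHom hI z ∈ ball (c : ℍ) r ↔ z ∈ ball (c : ℂ) r := by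
  rw [mem_ball_iff_norm, mem_ball_iff_norm, ← sliceHom_ofReal hI, ← map_sub, norm_sliceHom]

theorem exists_sliceHom_eq (q : ℍ) : ∃ I, ∃ hI : I ∈ quatSphere, ∃ z, sliceHom hI z = q := by
  obtain ⟨I, hI, h_im⟩ := exists_mem_quatSphere_norm_smul_eq_im q
  refine ⟨I, hI, ⟨q.re, ‖q.im‖⟩, ?_⟩
  rw [sliceHom_apply, h_im, Quaternion.re_add_im]

theorem comp_sliceHom_eq (f : ℍ → ℍ) (hI : I ∈ quatSphere) :
    (fun z => f (sliceHom hI z)) = (fun p => f (sliceVal I p)) ∘ Complex.equivRealProdCLM :=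
  funext fun z => congrArg f (sliceVal_equivRealProdCLM hI z).symm

variable {f : ℍ → ℍ} {U : Set ℍ} {w : ℂ}

theorem SliceRegularOn.differentiableAt_comp_sliceHom (hf : SliceRegularOn f U)
    (hI : I ∈ quatSphere) (hw : sliceHom hI w ∈ U) :
    DifferentiableAt ℝ (fun z => f (sliceHom hI z)) w := by
  rw [← sliceVal_equivRealProdCLM] at hw
  rw [comp_sliceHom_eq, Complex.equivRealProdCLM.comp_right_differentiableAt_iff]
  exact (hf I hI _ hw).1

theorem SliceRegularOn.cauchyRiemann_comp_sliceHom (hf : SliceRegularOn f U) (hI : I ∈ quatSphere)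
    (hw : sliceHom hI w ∈ U) :
    fderiv ℝ (fun z => f (sliceHom hI z)) w 1 +
      I * fderiv ℝ (fun z => f (sliceHom hI z)) w Complex.I = 0 := by
  rw [← sliceVal_equivRealProdCLM] at hw
  rw [comp_sliceHom_eq, Complex.equivRealProdCLM.comp_right_fderiv]
  simpa using (hf I hI _ hw).2

end Slices

theorem taylor_expansion_at_real_center (y₀ R : ℝ) (hR : 0 < R) (f : ℍ → ℍ)
    (hf : SliceRegularOn f (Metric.ball ((y₀ : ℍ)) R)) :
    ∀ q ∈ Metric.ball ((y₀ : ℍ)) R,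
      HasSum
        (fun m : ℕ =>
          (q - (y₀ : ℍ)) ^ m *
            (((m ! : ℝ)⁻¹) • iteratedDeriv m (fun t : ℝ => f ((t : ℍ))) y₀))
        (f q) := by
  intro q hq
  obtain ⟨I, hI, z, rfl⟩ := exists_sliceHom_eq q
  have h_mem {w : ℂ} (hw : w ∈ ball (y₀ : ℂ) R) : sliceHom hI w ∈ ball (y₀ : ℍ) R :=
    (sliceHom_mem_ball_iff hI).2 hw
  have h_taylor := hasSum_taylorSeries_of_algHom (sliceHom hI) (fun w => (norm_sliceHom hI w).le)
    (fun w hw => hf.differentiableAt_comp_sliceHom hI (h_mem hw))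
    (fun w hw => by
      rw [sliceHom_I]
      exact hf.cauchyRiemann_comp_sliceHom hI (h_mem hw))
    ((sliceHom_mem_ball_iff hI).1 hq)
  simpa only [map_sub, sliceHom_ofReal] using h_taylor
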